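/- Let q and z be complex numbers with 0 < |q| < 1, z ≠ 0, and z^{±1} ≠ q^{2j+1} for every integer j ≥ 0. Then 1/((zq;q^2)_∞ · (q/z;q^2)_∞ · (q;q^2)_∞) = (1/((q;q)_∞ (q^2;q^2)_∞)) · Σ_{n=0}^∞ (−1)^n q^{n^2+n} · (1 − q^{4n+2}) / ((1 − z q^{2n+1})(1 − z^{−1} q^{2n+1})), with the series on the right converging absolutely. -/

import Mathlib

/-!
On the curve `a * b = q` every factor `(1 - a * q ^ n) * (1 - b * q ^ n)` is affine in `a + b`, with
root `(q ^ n)⁻¹ + q ^ (n + 1)`. Lagrange interpolation of the constant `1` at the first `N + 1`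
roots is the partial fraction expansion of `1 / ((a;q)_{N+1} (b;q)_{N+1})`. At the root of the
`n`-th factor the `m`-th one equals `(1 - q ^ (m - n)) * (1 - q ^ (n + 1 + m))`, so the coefficients
are `(-1) ^ n * q ^ (n * (n + 1) / 2) * (1 - q ^ (2 * n + 1)) / ((q;q)_{N+1+n} (q;q)_{N-n})`.

Let `N → ∞` by dominated convergence: `1 / ((q;q)_{N+1+n} (q;q)_{N-n})` is bounded and tends to
`1 / (q;q)_∞ ^ 2`. Taking `a = z * q`, `b = q / z` and base `q ^ 2`, the identity
`(q;q)_∞ = (q;q²)_∞ (q²;q²)_∞` gives the claim.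
-/

open Finset

/-- Infinite q-Pochhammer symbol `(a;q)_∞`. -/
noncomputable def qPochInf (a q : ℂ) : ℂ := ∏' j : ℕ, (1 - a * q ^ j)

open Filter Topology

/-- The finite q-Pochhammer symbol `(a;q)_n`. -/
def qPoch {R : Type*} [CommRing R] (a q : R) (n : ℕ) : R := ∏ j ∈ range n, (1 - a * q ^ j)

/-- The `n`-th term of the partial fraction expansion of `(q;q)_∞² / ((a;q)_∞ (b;q)_∞)` on the curve
`a * b = q`; the exponent `n * (n + 1) / 2` is written as a binomial coefficient. -/
def partialFractionTerm {K : Type*} [Field K] (a b q : K) (n : ℕ) : K :=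
  (-1) ^ n * q ^ (n + 1).choose 2 * (1 - q ^ (2 * n + 1)) / ((1 - a * q ^ n) * (1 - b * q ^ n))

/-- The value of `a + b` at which the factor `(1 - a * q ^ n) * (1 - b * q ^ n)` vanishes on the
curve `a * b = q`. -/
def factorRoot {K : Type*} [Field K] (q : K) (n : ℕ) : K := (q ^ n)⁻¹ + q ^ (n + 1)

lemma pow_ne_one_of_not_isOfFinOrder {M : Type*} [Monoid M] {x : M} (hx : ¬IsOfFinOrder x) {n : ℕ}
    (hn : n ≠ 0) : x ^ n ≠ 1 :=
  fun h => hx (isOfFinOrder_iff_pow_eq_one.2 ⟨n, Nat.pos_of_ne_zero hn, h⟩)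

section CommRing

variable {R : Type*} [CommRing R]

lemma qPoch_zero (a q : R) : qPoch a q 0 = 1 :=
  prod_range_zero _

lemma qPoch_succ (a q : R) (n : ℕ) : qPoch a q (n + 1) = qPoch a q n * (1 - a * q ^ n) :=
  prod_range_succ _ n

lemma qPoch_add (a q : R) (m n : ℕ) :
    qPoch a q (m + n) = qPoch a q m * qPoch (a * q ^ m) q n := by
  simp only [qPoch, prod_range_add, pow_add, mul_assoc]

lemma qPoch_self_ne_zero [IsDomain R] {q : R} (hq : ¬IsOfFinOrder q) (n : ℕ) :
    qPoch q q n ≠ 0 := by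
  refine prod_ne_zero_iff.2 fun j _ => sub_ne_zero.2 (Ne.symm ?_)
  rw [← pow_succ']
  exact pow_ne_one_of_not_isOfFinOrder hq j.succ_ne_zero

end CommRing

section Field

variable {K : Type*} [Field K] {a b q : K}

lemma inv_prod_mul_sub_eq_sum {ι : Type*} [DecidableEq ι] {s : Finset ι} (hs : s.Nonempty)
    {v : ι → K} (hv : Set.InjOn v s) (u : ι → K) {x : K} (hx : ∀ i ∈ s, x ≠ v i) :
    (∏ i ∈ s, u i * (x - v i))⁻¹ =
      ∑ i ∈ s, (∏ j ∈ s.erase i, u j * (v i - v j))⁻¹ * (u i * (x - v i))⁻¹ := by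
  have interpolation :
      1 = (∏ i ∈ s, (x - v i)) * ∑ i ∈ s, Lagrange.nodalWeight s v i * (x - v i)⁻¹ := by
    simpa [Lagrange.interpolate_one hv hs, Lagrange.eval_nodal] using
      Lagrange.eval_interpolate_not_at_node 1 hx
  rw [prod_mul_distrib, mul_inv, ← eq_inv_of_mul_eq_one_right interpolation.symm, mul_sum]
  refine sum_congr rfl fun i hi => ?_
  rw [prod_mul_distrib, ← mul_prod_erase s u hi, Lagrange.nodalWeight, prod_inv_distrib]
  simp only [mul_inv]
  ring

lemma one_sub_mul_one_sub_eq (hq0 : q ≠ 0) (hab : a * b = q) (n : ℕ) :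
    (1 - a * q ^ n) * (1 - b * q ^ n) = -q ^ n * (a + b - factorRoot q n) := by
  rw [factorRoot]
  field_simp
  linear_combination q ^ (2 * n) * hab

lemma neg_pow_mul_factorRoot_sub (hq0 : q ≠ 0) (m n : ℕ) :
    -q ^ m * (factorRoot q n - factorRoot q m) = (1 - q ^ m / q ^ n) * (1 - q ^ (n + 1 + m)) := by
  have hcurve : (q ^ n)⁻¹ * q ^ (n + 1) = q := by
    rw [pow_succ, inv_mul_cancel_left₀ (pow_ne_zero n hq0)]
  have h := one_sub_mul_one_sub_eq hq0 hcurve m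
  rw [← factorRoot, ← pow_add] at h
  rw [← h, div_eq_inv_mul]

lemma factorRoot_injective (hq0 : q ≠ 0) (hq : ¬IsOfFinOrder q) :
    Function.Injective (factorRoot q) := by
  refine Function.Injective.of_lt_imp_ne fun m n hmn heq => ?_
  have hprod := neg_pow_mul_factorRoot_sub hq0 n m
  rw [heq, sub_self, mul_zero, div_eq_mul_inv, ← pow_sub₀ q hq0 hmn.le, zero_eq_mul, sub_eq_zero,
    sub_eq_zero] at hprod
  exact hprod.elim (pow_ne_one_of_not_isOfFinOrder hq (by omega)).symm
    (pow_ne_one_of_not_isOfFinOrder hq (by omega)).symm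

lemma prod_one_sub_pow_div_pow (hq0 : q ≠ 0) (n : ℕ) :
    ∏ m ∈ range n, (1 - q ^ m / q ^ n) = (-1) ^ n / q ^ (n + 1).choose 2 * qPoch q q n := by
  induction n with
  | zero => simp [qPoch_zero]
  | succ n ih =>
    have hshift (m : ℕ) : q ^ (m + 1) / q ^ (n + 1) = q ^ m / q ^ n := by
      rw [pow_succ, pow_succ, mul_div_mul_right _ _ hq0]
    have hchoose : (n + 1 + 1).choose 2 = (n + 1) + (n + 1).choose 2 := by
      rw [Nat.choose_succ_succ', Nat.choose_one_right]
    simp only [prod_range_succ', hshift, ih, qPoch_succ, hchoose, pow_add q (n + 1)]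
    field_simp
    ring

/-- The factor `1 - q ^ (2 * n + 1)` is the second half of the omitted factor `m = n`. It lets the
products of `1 - q ^ (n + 1 + m)` close up to a `q`-Pochhammer symbol. -/
lemma prod_erase_one_sub_mul_one_sub (hq0 : q ≠ 0) (n k : ℕ) :
    (∏ m ∈ (range (n + k + 1)).erase n, (1 - q ^ m / q ^ n) * (1 - q ^ (n + 1 + m))) *
        (1 - q ^ (2 * n + 1)) =
      (-1) ^ n / q ^ (n + 1).choose 2 * (qPoch q q (n + k + 1 + n) * qPoch q q k) := by
  induction k with
  | zero =>
    have htail : ∏ m ∈ range n, (1 - q ^ (n + 1 + m)) = qPoch (q * q ^ n) q n := by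
      simp only [qPoch, ← pow_succ', ← pow_add]
    rw [add_zero, range_add_one, erase_insert notMem_range_self, prod_mul_distrib,
      prod_one_sub_pow_div_pow hq0, htail, add_right_comm, qPoch_succ, qPoch_add, qPoch_zero]
    ring
  | succ k ih =>
    rw [range_add_one, erase_insert_of_ne (by omega), prod_insert (by simp), mul_assoc,
      ← add_assoc n k 1, ih, add_right_comm (n + k + 1) 1 n, qPoch_succ _ _ (n + k + 1 + n),
      qPoch_succ _ _ k]
    have hdiv : q ^ (n + k + 1) / q ^ n = q * q ^ k := by
      rw [add_assoc, pow_add, mul_div_cancel_left₀ _ (pow_ne_zero n hq0), pow_succ']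
    rw [hdiv]
    ring

theorem inv_qPoch_mul_qPoch_eq_sum (hq0 : q ≠ 0) (hq : ¬IsOfFinOrder q) (hab : a * b = q)
    {N : ℕ} (ha : ∀ n ≤ N, a * q ^ n ≠ 1) (hb : ∀ n ≤ N, b * q ^ n ≠ 1) :
    (qPoch a q (N + 1) * qPoch b q (N + 1))⁻¹ =
      ∑ n ∈ range (N + 1),
        partialFractionTerm a b q n * (qPoch q q (N + 1 + n) * qPoch q q (N - n))⁻¹ := by
  have hroot (n : ℕ) (hn : n ≤ N) : a + b ≠ factorRoot q n := fun h => by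
    have hzero := one_sub_mul_one_sub_eq hq0 hab n
    rw [h, sub_self, mul_zero, mul_eq_zero, sub_eq_zero, sub_eq_zero] at hzero
    exact hzero.elim (ha n hn ∘ Eq.symm) (hb n hn ∘ Eq.symm)
  rw [qPoch, qPoch, ← prod_mul_distrib]
  simp only [one_sub_mul_one_sub_eq hq0 hab]
  rw [inv_prod_mul_sub_eq_sum nonempty_range_add_one (factorRoot_injective hq0 hq).injOn _
    fun n hn => hroot n (mem_range_succ_iff.1 hn)]
  refine sum_congr rfl fun n hn => ?_
  obtain ⟨k, rfl⟩ := Nat.exists_eq_add_of_le (mem_range_succ_iff.1 hn)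
  have hcoeff := prod_erase_one_sub_mul_one_sub hq0 n k
  have hodd : 1 - q ^ (2 * n + 1) ≠ 0 :=
    sub_ne_zero.2 (pow_ne_one_of_not_isOfFinOrder hq (2 * n).succ_ne_zero).symm
  simp only [neg_pow_mul_factorRoot_sub hq0]
  rw [eq_div_of_mul_eq hodd hcoeff, ← one_sub_mul_one_sub_eq hq0 hab, partialFractionTerm,
    Nat.add_sub_cancel_left]
  have hsign : ((-1 : K) ^ n)⁻¹ = (-1) ^ n := by rw [← inv_pow, inv_neg_one]
  simp only [div_eq_mul_inv, mul_inv, inv_inv, hsign]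
  ring

end Field

section Limit

lemma tendsto_sum_mul_of_norm_le {α ι R : Type*} [NormedRing R] [CompleteSpace R]
    {l : Filter α} {s : α → Finset ι} (hs : Tendsto s l atTop) {t : ι → R}
    (ht : Summable fun i => ‖t i‖) {w : α → ι → R} {c : R}
    (hw : ∀ i, Tendsto (fun x => w x i) l (𝓝 c)) {C : ℝ} (hC : ∀ x i, ‖w x i‖ ≤ C) :
    Tendsto (fun x => ∑ i ∈ s x, t i * w x i) l (𝓝 ((∑' i, t i) * c)) := by
  rw [← ht.of_norm.tsum_mul_right]
  refine Tendsto.congr (fun x => (sum_eq_tsum_indicator _ (s x)).symm) ?_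
  refine tendsto_tsum_of_dominated_convergence (ht.mul_right C) (fun i => ?_)
    (Eventually.of_forall fun x i => ?_)
  · refine ((hw i).const_mul (t i)).congr' ?_
    filter_upwards [hs.eventually_ge_atTop {i}] with x hx
    exact (Set.indicator_of_mem (mem_coe.2 (singleton_subset_iff.1 hx)) fun i => t i * w x i).symm
  · exact (norm_indicator_le_norm_self _ _).trans
      ((norm_mul_le _ _).trans (mul_le_mul_of_nonneg_left (hC x i) (norm_nonneg _)))

variable {a b q : ℂ}

lemma summable_norm_neg_mul_pow (a : ℂ) (hq : ‖q‖ < 1) :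
    Summable fun j : ℕ => ‖-(a * q ^ j)‖ := by
  simpa using (summable_geometric_of_lt_one (norm_nonneg q) hq).mul_left ‖a‖

lemma multipliable_one_sub_mul_pow (a : ℂ) (hq : ‖q‖ < 1) :
    Multipliable fun j : ℕ => 1 - a * q ^ j := by
  simpa only [sub_eq_add_neg] using
    multipliable_one_add_of_summable (summable_norm_neg_mul_pow a hq)

lemma tendsto_qPoch (a : ℂ) (hq : ‖q‖ < 1) : Tendsto (qPoch a q) atTop (𝓝 (qPochInf a q)) :=
  (multipliable_one_sub_mul_pow a hq).tendsto_prod_tprod_nat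

lemma qPochInf_ne_zero (hq : ‖q‖ < 1) (ha : ∀ j : ℕ, a * q ^ j ≠ 1) : qPochInf a q ≠ 0 := by
  have hfactor (j : ℕ) : 1 + -(a * q ^ j) ≠ 0 := by
    rw [← sub_eq_add_neg]
    exact sub_ne_zero.2 (ha j).symm
  simpa only [qPochInf, sub_eq_add_neg] using
    tprod_one_add_ne_zero_of_summable hfactor (summable_norm_neg_mul_pow a hq)

lemma qPochInf_eq_mul_sq (a : ℂ) (hq : ‖q‖ < 1) :
    qPochInf a q = qPochInf a (q ^ 2) * qPochInf (a * q) (q ^ 2) := by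
  have hq2 : ‖q ^ 2‖ < 1 := (norm_pow q 2).trans_lt (pow_lt_one₀ (norm_nonneg q) hq two_ne_zero)
  have heven (k : ℕ) : a * q ^ (2 * k) = a * (q ^ 2) ^ k := by rw [pow_mul]
  have hodd (k : ℕ) : a * q ^ (2 * k + 1) = a * q * (q ^ 2) ^ k := by ring
  have hsplit := tprod_even_mul_odd (f := fun j => 1 - a * q ^ j)
  simp only [heven, hodd] at hsplit
  exact (hsplit (multipliable_one_sub_mul_pow a hq2)
    (multipliable_one_sub_mul_pow (a * q) hq2)).symm

lemma summable_norm_partialFractionTerm (a b : ℂ) (hq : ‖q‖ < 1) :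
    Summable fun n => ‖partialFractionTerm a b q n‖ := by
  have hpow : Tendsto (fun n : ℕ => q ^ n) atTop (𝓝 0) :=
    tendsto_pow_atTop_nhds_zero_of_norm_lt_one hq
  have hodd : Tendsto (fun n : ℕ => q ^ (2 * n + 1)) atTop (𝓝 0) :=
    hpow.comp (tendsto_atTop_mono (fun n => show n ≤ 2 * n + 1 by omega) tendsto_id)
  have hquot : Tendsto (fun n : ℕ => (1 - q ^ (2 * n + 1)) / ((1 - a * q ^ n) * (1 - b * q ^ n)))
      atTop (𝓝 ((1 - 0) / ((1 - a * 0) * (1 - b * 0)))) :=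
    (hodd.const_sub 1).div
      (((hpow.const_mul a).const_sub 1).mul ((hpow.const_mul b).const_sub 1)) (by simp)
  have hmain : Summable fun n : ℕ => ‖(-1) ^ n * q ^ (n + 1).choose 2‖ := by
    refine (summable_geometric_of_lt_one (norm_nonneg q) hq).of_nonneg_of_le
      (fun n => norm_nonneg _) fun n => ?_
    have hle : n ≤ (n + 1).choose 2 := by
      rw [Nat.choose_succ_succ', Nat.choose_one_right]
      exact Nat.le_add_right _ _
    simpa using pow_le_pow_of_le_one (norm_nonneg q) hq.le hle
  simp only [partialFractionTerm, mul_div_assoc]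
  exact (hmain.mul_tendsto_const (Nat.cofinite_eq_atTop ▸ hquot)).norm

theorem inv_qPochInf_mul_qPochInf_eq_tsum (hq0 : q ≠ 0) (hq : ‖q‖ < 1) (hab : a * b = q)
    (ha : ∀ n : ℕ, a * q ^ n ≠ 1) (hb : ∀ n : ℕ, b * q ^ n ≠ 1) :
    (qPochInf a q * qPochInf b q)⁻¹ =
      (∑' n, partialFractionTerm a b q n) * (qPochInf q q * qPochInf q q)⁻¹ := by
  have hfin : ¬IsOfFinOrder q := fun h => hq.ne h.norm_eq_one
  have hself : qPochInf q q ≠ 0 := qPochInf_ne_zero hq fun j => by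
    rw [← pow_succ']
    exact pow_ne_one_of_not_isOfFinOrder hfin j.succ_ne_zero
  have hinv : Tendsto (fun m => (qPoch q q m)⁻¹) atTop (𝓝 (qPochInf q q)⁻¹) :=
    (tendsto_qPoch q hq).inv₀ hself
  obtain ⟨C, hC⟩ := hinv.norm.bddAbove_range
  have hbound (m : ℕ) : ‖(qPoch q q m)⁻¹‖ ≤ C := hC ⟨m, rfl⟩
  have hleft : Tendsto (fun N => (qPoch a q (N + 1) * qPoch b q (N + 1))⁻¹) atTop
      (𝓝 (qPochInf a q * qPochInf b q)⁻¹) :=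
    (((tendsto_qPoch a hq).mul (tendsto_qPoch b hq)).comp (tendsto_add_atTop_nat 1)).inv₀
      (mul_ne_zero (qPochInf_ne_zero hq ha) (qPochInf_ne_zero hq hb))
  refine tendsto_nhds_unique hleft ?_
  simp only [inv_qPoch_mul_qPoch_eq_sum hq0 hfin hab (fun n _ => ha n) (fun n _ => hb n), mul_inv]
  refine tendsto_sum_mul_of_norm_le (tendsto_finset_range.comp (tendsto_add_atTop_nat 1))
    (summable_norm_partialFractionTerm a b hq) (fun n => ?_) (C := C * C) fun N n => ?_
  · have hadd : Tendsto (fun N => N + 1 + n) atTop atTop :=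
      (tendsto_add_atTop_nat n).comp (tendsto_add_atTop_nat 1)
    exact (hinv.comp hadd).mul (hinv.comp (tendsto_sub_atTop_nat n))
  · exact norm_mul_le_of_le (hbound _) (hbound _)

end Limit

lemma partialFractionTerm_sq {K : Type*} [Field K] (q z : K) (n : ℕ) :
    partialFractionTerm (z * q) (q / z) (q ^ 2) n =
      (-1) ^ n * q ^ (n ^ 2 + n) * (1 - q ^ (4 * n + 2)) /
        ((1 - z * q ^ (2 * n + 1)) * (1 - z⁻¹ * q ^ (2 * n + 1))) := by
  have htriangle : 2 * (n + 1).choose 2 = n ^ 2 + n := by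
    rw [Nat.choose_two_right, Nat.mul_div_cancel' (Nat.even_mul_pred_self _).two_dvd,
      Nat.add_sub_cancel]
    ring
  rw [partialFractionTerm, ← pow_mul, htriangle]
  congr 2 <;> ring

/-- `1/((zq;q^2)_∞ (q/z;q^2)_∞ (q;q^2)_∞)
    = (1/((q;q)_∞ (q^2;q^2)_∞)) Σ_{n≥0} (−1)^n q^{n^2+n} (1−q^{4n+2})/((1−zq^{2n+1})(1−z⁻¹q^{2n+1}))`,
    with the right-hand series converging absolutely. -/
theorem statement4 (q z : ℂ) (hq0 : 0 < ‖q‖) (hq1 : ‖q‖ < 1) (hz : z ≠ 0)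
    (hzq : ∀ j : ℕ, z ≠ q ^ (2 * j + 1) ∧ z⁻¹ ≠ q ^ (2 * j + 1)) :
    Summable (fun n : ℕ =>
      ‖(-1 : ℂ) ^ n * q ^ (n ^ 2 + n) * (1 - q ^ (4 * n + 2)) /
        ((1 - z * q ^ (2 * n + 1)) * (1 - z⁻¹ * q ^ (2 * n + 1)))‖) ∧
    1 / (qPochInf (z * q) (q ^ 2) * qPochInf (q / z) (q ^ 2) * qPochInf q (q ^ 2))
      = 1 / (qPochInf q q * qPochInf (q ^ 2) (q ^ 2)) *
        ∑' n : ℕ, (-1 : ℂ) ^ n * q ^ (n ^ 2 + n) * (1 - q ^ (4 * n + 2)) /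
          ((1 - z * q ^ (2 * n + 1)) * (1 - z⁻¹ * q ^ (2 * n + 1))) := by
  have hQ : ‖q ^ 2‖ < 1 := (norm_pow q 2).trans_lt (pow_lt_one₀ (norm_nonneg q) hq1 two_ne_zero)
  have hQ0 : q ^ 2 ≠ 0 := pow_ne_zero 2 (norm_pos_iff.1 hq0)
  have hcurve : z * q * (q / z) = q ^ 2 := by field_simp
  have ha (n : ℕ) : z * q * (q ^ 2) ^ n ≠ 1 := fun h =>
    (hzq n).2 (inv_eq_of_mul_eq_one_right (by rw [← h]; ring))
  have hb (n : ℕ) : q / z * (q ^ 2) ^ n ≠ 1 := fun h =>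
    (hzq n).1 (by field_simp at h; rw [← h]; ring)
  have hexpansion := inv_qPochInf_mul_qPochInf_eq_tsum hQ0 hQ hcurve ha hb
  simp only [← partialFractionTerm_sq]
  refine ⟨summable_norm_partialFractionTerm _ _ hQ, ?_⟩
  rw [qPochInf_eq_mul_sq q hq1, ← sq, one_div, mul_inv, hexpansion]
  ring
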